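/- For every z > 2, the quantity R₂₂ = Σᵢ₌₁ⁿ ∫_{−∞}^1 E[(W̄⁽ⁱ⁾ + x̄ᵢ) f_z(W̄⁽ⁱ⁾ + x̄ᵢ) − (W̄⁽ⁱ⁾ + t) f_z(W̄⁽ⁱ⁾ + t)] K̄ᵢ(t) dt satisfies |R₂₂| ≤ (103.2 + 80 e^{e² − 2}/√(2π)) · e^{−z/2} · (β₂ + β₃). -/

import Mathlib

open MeasureTheory ProbabilityTheory Real

/-- The standard normal cumulative distribution function. -/
noncomputable def Phi (z : ℝ) : ℝ :=
  (Real.sqrt (2 * Real.pi))⁻¹ * ∫ u in Set.Iic z, Real.exp (-u ^ 2 / 2)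

/-- The bounded solution `f_z` of the Stein equation
`f'(w) - w f(w) = 1{w ≤ z} - Φ(z)`. -/
noncomputable def fz (z w : ℝ) : ℝ :=
  if w ≤ z then Real.sqrt (2 * Real.pi) * Real.exp (w ^ 2 / 2) * Phi w * (1 - Phi z)
  else Real.sqrt (2 * Real.pi) * Real.exp (w ^ 2 / 2) * Phi z * (1 - Phi w)

/-- The derivative `f_z'`, expressed via the Stein equation. -/
noncomputable def fz' (z w : ℝ) : ℝ :=
  w * fz z w + (if w ≤ z then 1 else 0) - Phi z

/-- The truncation `x̄ᵢ = ξᵢ 1{ξᵢ ≤ 1}`. -/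
noncomputable def xbar {Ω : Type*} {n : ℕ} (ξ : Fin n → Ω → ℝ) (i : Fin n) (ω : Ω) : ℝ :=
  if ξ i ω ≤ 1 then ξ i ω else 0

/-- `W̄ = ∑ᵢ x̄ᵢ`. -/
noncomputable def Wbar {Ω : Type*} {n : ℕ} (ξ : Fin n → Ω → ℝ) (ω : Ω) : ℝ :=
  ∑ i, xbar ξ i ω

/-- `W̄⁽ⁱ⁾ = W̄ - x̄ᵢ`. -/
noncomputable def Wbari {Ω : Type*} {n : ℕ} (ξ : Fin n → Ω → ℝ) (i : Fin n) (ω : Ω) : ℝ :=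
  Wbar ξ ω - xbar ξ i ω

/-- `K̄ᵢ(t) = E[x̄ᵢ (1{0 ≤ t ≤ x̄ᵢ} - 1{x̄ᵢ ≤ t < 0})]`. -/
noncomputable def Kbar {Ω : Type*} [MeasureSpace Ω] {n : ℕ} (ξ : Fin n → Ω → ℝ)
    (i : Fin n) (t : ℝ) : ℝ :=
  ∫ ω, xbar ξ i ω * ((if 0 ≤ t ∧ t ≤ xbar ξ i ω then (1 : ℝ) else 0)
    - (if xbar ξ i ω ≤ t ∧ t < 0 then (1 : ℝ) else 0))

/-- `β₂ = ∑ᵢ E[ξᵢ² 1{|ξᵢ| > 1}]`. -/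
noncomputable def beta2 {Ω : Type*} [MeasureSpace Ω] {n : ℕ} (ξ : Fin n → Ω → ℝ) : ℝ :=
  ∑ i, ∫ ω, (if 1 < |ξ i ω| then (ξ i ω) ^ 2 else 0)

/-- `β₃ = ∑ᵢ E[|ξᵢ|³ 1{|ξᵢ| ≤ 1}]`. -/
noncomputable def beta3 {Ω : Type*} [MeasureSpace Ω] {n : ℕ} (ξ : Fin n → Ω → ℝ) : ℝ :=
  ∑ i, ∫ ω, (if |ξ i ω| ≤ 1 then |ξ i ω| ^ 3 else 0)


/-- Unnormalised Gaussian integral. -/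
noncomputable def gI (w : ℝ) : ℝ := ∫ u in Set.Iic w, Real.exp (-u ^ 2 / 2)

lemma gauss_integrable : Integrable (fun u : ℝ => Real.exp (-u ^ 2 / 2)) := by
  have := integrable_exp_neg_mul_sq (b := 1/2) (by norm_num)
  refine this.congr (Filter.Eventually.of_forall fun u => ?_)
  simp only; congr 1; ring

lemma gauss_total : ∫ u : ℝ, Real.exp (-u ^ 2 / 2) = Real.sqrt (2 * Real.pi) := by
  have := integral_gaussian (1/2)
  rw [show 2 * Real.pi = Real.pi / (1/2) by ring, ← this]
  congr 1; funext u; congr 1; ring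

lemma gI_nonneg (w : ℝ) : 0 ≤ gI w :=
  integral_nonneg fun _ => (Real.exp_pos _).le

lemma gI_add_neg (w : ℝ) : gI w + gI (-w) = Real.sqrt (2 * Real.pi) := by
  have h : gI (-w) = ∫ u in Set.Ioi w, Real.exp (-u ^ 2 / 2) := by
    unfold gI
    have := integral_comp_neg_Ioi w (fun u : ℝ => Real.exp (-u ^ 2 / 2))
    rw [← this]; simp
  rw [h, ← gauss_total, gI]
  have := integral_add_compl (μ := volume) (s := Set.Iic w) measurableSet_Iic gauss_integrable
  rw [← this, Set.compl_Iic]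

lemma sqrt_two_pi_pos : 0 < Real.sqrt (2 * Real.pi) := by positivity

lemma gI_le (w : ℝ) : gI w ≤ Real.sqrt (2 * Real.pi) := by
  have := gI_add_neg w
  have := gI_nonneg (-w)
  linarith

lemma gI_hasDeriv (w : ℝ) : HasDerivAt gI (Real.exp (-w ^ 2 / 2)) w := by
  have hc : Continuous (fun u : ℝ => Real.exp (-u ^ 2 / 2)) := by fun_prop
  have h1 : gI = fun x => gI 0 + ∫ u in (0:ℝ)..x, Real.exp (-u ^ 2 / 2) := by
    funext x
    have := intervalIntegral.integral_Iic_sub_Iic (μ := volume) (a := 0) (b := x)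
      (f := fun u : ℝ => Real.exp (-u ^ 2 / 2)) gauss_integrable.integrableOn
      gauss_integrable.integrableOn
    unfold gI; linarith
  rw [h1]
  exact (intervalIntegral.integral_hasDerivAt_right (hc.intervalIntegrable _ _)
    (hc.stronglyMeasurableAtFilter _ _) hc.continuousAt).const_add _

lemma gI_tendsto : Filter.Tendsto gI Filter.atBot (nhds 0) := by
  have h0 := (intervalIntegral_tendsto_integral_Iic (μ := volume) 0
    (f := fun u : ℝ => Real.exp (-u ^ 2 / 2)) gauss_integrable.integrableOn
    (Filter.tendsto_id (α := ℝ) (x := Filter.atBot)))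
  have h1 : gI = fun x => gI 0 - ∫ u in x..(0:ℝ), Real.exp (-u ^ 2 / 2) := by
    funext x
    have := intervalIntegral.integral_Iic_sub_Iic (μ := volume) (a := x) (b := 0)
      (f := fun u : ℝ => Real.exp (-u ^ 2 / 2)) gauss_integrable.integrableOn
      gauss_integrable.integrableOn
    unfold gI; linarith
  rw [h1]
  have := (tendsto_const_nhds (x := gI 0)).sub h0
  simpa [gI] using this

lemma gauss_tendsto : Filter.Tendsto (fun w : ℝ => Real.exp (-w ^ 2 / 2)) Filter.atBot (nhds 0) := by
  apply Real.tendsto_exp_atBot.comp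
  have : Filter.Tendsto (fun w : ℝ => w ^ 2) Filter.atBot Filter.atTop := by
    have := Filter.tendsto_id (α := ℝ) (x := Filter.atBot)
    simpa [sq] using this.atBot_mul_atBot₀ this
  have := Filter.tendsto_neg_atTop_atBot.comp (this.atTop_div_const (r := 2) (by norm_num))
  refine this.congr fun x => ?_
  simp [Function.comp]; ring

lemma gauss_hasDeriv (x : ℝ) :
    HasDerivAt (fun x : ℝ => Real.exp (-x ^ 2 / 2)) (Real.exp (-x ^ 2 / 2) * (-x)) x := by
  have := ((hasDerivAt_pow 2 x).fun_neg.div_const 2).exp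
  refine this.congr_deriv ?_
  congr 1; norm_num; ring

/-- Mills upper bound. -/
lemma mills_upper (w : ℝ) (hw : w < 0) : gI w * (-w) ≤ Real.exp (-w ^ 2 / 2) := by
  have hanti : AntitoneOn (fun x : ℝ => gI x + Real.exp (-x ^ 2 / 2) / x) (Set.Iio 0) := by
    have hd : ∀ x ∈ Set.Iio (0:ℝ), HasDerivAt (fun x : ℝ => gI x + Real.exp (-x ^ 2 / 2) / x)
        (- Real.exp (-x ^ 2 / 2) / x ^ 2) x := by
      intro x hx
      have hx0 : x ≠ 0 := (ne_of_lt hx)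
      have h1 : HasDerivAt (fun x : ℝ => Real.exp (-x ^ 2 / 2)) (Real.exp (-x ^ 2 / 2) * (-x)) x := gauss_hasDeriv x
      refine ((gI_hasDeriv x).fun_add (h1.fun_div (hasDerivAt_id' x) hx0)).congr_deriv ?_
      field_simp; ring
    apply antitoneOn_of_deriv_nonpos (convex_Iio 0)
    · exact fun x hx => (hd x hx).continuousAt.continuousWithinAt
    · intro x hx
      rw [interior_Iio] at hx
      exact (hd x hx).differentiableAt.differentiableWithinAt
    · intro x hx
      rw [interior_Iio] at hx
      rw [(hd x hx).deriv, neg_div]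
      have : 0 ≤ Real.exp (-x ^ 2 / 2) / x ^ 2 := by positivity
      linarith
  have hlim : Filter.Tendsto (fun x : ℝ => gI x + Real.exp (-x ^ 2 / 2) / x) Filter.atBot
      (nhds 0) := by
    have := gI_tendsto.add (gauss_tendsto.mul tendsto_inv_atBot_zero)
    simpa [div_eq_mul_inv] using this
  have key : gI w + Real.exp (-w ^ 2 / 2) / w ≤ 0 := by
    refine ge_of_tendsto hlim ?_
    filter_upwards [Filter.eventually_le_atBot w] with x hx
    exact hanti (lt_of_le_of_lt hx hw) hw hx
  have h2 : Real.exp (-w ^ 2 / 2) / w * w = Real.exp (-w ^ 2 / 2) :=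
    div_mul_cancel₀ _ hw.ne
  nlinarith

/-- Mills lower bound. -/
lemma mills_lower (w : ℝ) : 0 ≤ (1 + w ^ 2) * gI w + w * Real.exp (-w ^ 2 / 2) := by
  have hmono : Monotone (fun x : ℝ => gI x + x * Real.exp (-x ^ 2 / 2) / (1 + x ^ 2)) := by
    have hd : ∀ x : ℝ, HasDerivAt (fun x : ℝ => gI x + x * Real.exp (-x ^ 2 / 2) / (1 + x ^ 2))
        (2 * Real.exp (-x ^ 2 / 2) / (1 + x ^ 2) ^ 2) x := by
      intro x
      have h1 : HasDerivAt (fun x : ℝ => Real.exp (-x ^ 2 / 2)) (Real.exp (-x ^ 2 / 2) * (-x)) x := gauss_hasDeriv x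
      have h2 : HasDerivAt (fun x : ℝ => 1 + x ^ 2) (2 * x) x := by
        simpa using (hasDerivAt_pow 2 x).const_add 1
      have h3 : (1 + x ^ 2) ≠ 0 := by positivity
      refine ((gI_hasDeriv x).fun_add
        (((hasDerivAt_id' x).fun_mul h1).fun_div h2 h3)).congr_deriv ?_
      field_simp; ring
    apply monotone_of_deriv_nonneg
    · exact fun x => (hd x).differentiableAt
    · intro x
      rw [(hd x).deriv]; positivity
  have hlim : Filter.Tendsto (fun x : ℝ => gI x + x * Real.exp (-x ^ 2 / 2) / (1 + x ^ 2))
      Filter.atBot (nhds 0) := by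
    have h1 : Filter.Tendsto (fun x : ℝ => x * Real.exp (-x ^ 2 / 2) / (1 + x ^ 2))
      Filter.atBot (nhds 0) := by
      apply squeeze_zero_norm (a := fun x : ℝ => Real.exp (-x ^ 2 / 2)) _ gauss_tendsto
      intro x
      rw [Real.norm_eq_abs, abs_div, abs_mul, abs_of_pos (Real.exp_pos _),
        abs_of_pos (show 0 < 1 + x ^ 2 by positivity), div_le_iff₀ (by positivity), mul_comm]
      apply mul_le_mul_of_nonneg_left _ (Real.exp_pos _).le
      rw [← sq_abs x]; nlinarith [sq_nonneg (|x| - 1), abs_nonneg x]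
    simpa using gI_tendsto.add h1
  have key : 0 ≤ gI w + w * Real.exp (-w ^ 2 / 2) / (1 + w ^ 2) := by
    refine le_of_tendsto hlim ?_
    filter_upwards [Filter.eventually_le_atBot w] with x hx
    exact hmono hx
  have h3 : (1 + w ^ 2) ≠ 0 := by positivity
  have : (1 + w ^ 2) * gI w + w * Real.exp (-w ^ 2 / 2) =
    (1 + w ^ 2) * (gI w + w * Real.exp (-w ^ 2 / 2) / (1 + w ^ 2)) := by field_simp
  rw [this]; positivity

/-- `G w = w e^{w²/2} I(w)`. -/
noncomputable def gG (w : ℝ) : ℝ := w * (Real.exp (w ^ 2 / 2) * gI w)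

/-- derivative of `gG` -/
noncomputable def gG' (w : ℝ) : ℝ := (1 + w ^ 2) * (Real.exp (w ^ 2 / 2) * gI w) + w

lemma gG_hasDeriv (w : ℝ) : HasDerivAt gG (gG' w) w := by
  have h1 : HasDerivAt (fun x : ℝ => Real.exp (x ^ 2 / 2)) (Real.exp (w ^ 2 / 2) * w) w := by
    have := ((hasDerivAt_pow 2 w).div_const 2).exp
    refine this.congr_deriv ?_
    congr 1; norm_num
  refine ((hasDerivAt_id' w).fun_mul (h1.fun_mul (gI_hasDeriv w))).congr_deriv ?_
  have e : Real.exp (w ^ 2 / 2) * Real.exp (-w ^ 2 / 2) = 1 := by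
    rw [← Real.exp_add, ← Real.exp_zero]; congr 1; ring
  simp only [gG']
  rw [e]; ring

lemma exp_half_cancel (w : ℝ) : Real.exp (w ^ 2 / 2) * Real.exp (-w ^ 2 / 2) = 1 := by
  rw [← Real.exp_add, ← Real.exp_zero]; congr 1; ring

lemma gG'_nonneg (w : ℝ) : 0 ≤ gG' w := by
  have h := mul_nonneg (Real.exp_pos (w ^ 2 / 2)).le (mills_lower w)
  have e := exp_half_cancel w
  have e2 : gG' w = Real.exp (w ^ 2 / 2) * ((1 + w ^ 2) * gI w + w * Real.exp (-w ^ 2 / 2)) := by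
    unfold gG'
    linear_combination (-w) * e
  rw [e2]; exact h

lemma r_mul_le (w : ℝ) (hw : w ≤ 0) : (Real.exp (w ^ 2 / 2) * gI w) * (-w) ≤ 1 := by
  rcases hw.eq_or_lt with rfl | hw
  · simp
  have h := mul_le_mul_of_nonneg_left (mills_upper w hw) (Real.exp_pos (w ^ 2 / 2)).le
  have e := exp_half_cancel w
  nlinarith

lemma r_nonneg (w : ℝ) : 0 ≤ Real.exp (w ^ 2 / 2) * gI w :=
  mul_nonneg (Real.exp_pos _).le (gI_nonneg _)

lemma gG'_le_r (w : ℝ) (hw : w ≤ 0) : gG' w ≤ Real.exp (w ^ 2 / 2) * gI w := by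
  have := r_mul_le w hw
  unfold gG'; nlinarith

lemma sqrt_two_pi_le : Real.sqrt (2 * Real.pi) ≤ 2.6 := by
  rw [Real.sqrt_le_left (by norm_num)]
  have := Real.pi_lt_d2
  norm_num at *; linarith

lemma one_le_sqrt_two_pi : 2 ≤ Real.sqrt (2 * Real.pi) := by
  apply Real.le_sqrt_of_sq_le
  have := Real.pi_gt_three
  linarith

lemma r_le (w : ℝ) (hw : w ≤ 0) : Real.exp (w ^ 2 / 2) * gI w ≤ 5 := by
  by_cases h : w ≤ -1
  · have h1 := r_mul_le w hw
    have h2 := r_nonneg w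
    nlinarith
  · push Not at h
    have h1 : Real.exp (w ^ 2 / 2) ≤ 1.7 := by
      have : Real.exp (w ^ 2 / 2) ≤ Real.exp (1/2) := by
        apply Real.exp_le_exp.2; nlinarith
      have h2 : Real.exp (1/2) ^ 2 ≤ 1.7 ^ 2 := by
        rw [← Real.exp_nat_mul]
        have := Real.exp_one_lt_d9
        norm_num at *; linarith
      have := abs_le_of_sq_le_sq' h2 (by norm_num)
      linarith [this.2]
    have h2 := (gI_le w).trans sqrt_two_pi_le
    calc _ ≤ 1.7 * 2.6 := mul_le_mul h1 h2 (gI_nonneg _) (by norm_num)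
      _ ≤ 5 := by norm_num

/-- Gaussian tail. -/
noncomputable def gq (z : ℝ) : ℝ := (Real.sqrt (2 * Real.pi))⁻¹ * gI (-z)

lemma Phi_eq (w : ℝ) : Phi w = (Real.sqrt (2 * Real.pi))⁻¹ * gI w := rfl

lemma one_sub_Phi (w : ℝ) : 1 - Phi w = gq w := by
  have h := gI_add_neg w
  have hp := sqrt_two_pi_pos
  rw [Phi_eq, gq, eq_sub_of_add_eq' h, mul_sub, inv_mul_cancel₀ hp.ne']

lemma w_fz (z w : ℝ) : w * fz z w =
    if w ≤ z then gq z * gG w else -(1 - gq z) * gG (-w) := by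
  have hp := sqrt_two_pi_pos
  unfold fz
  split_ifs
  · rw [one_sub_Phi, Phi_eq, gG]; field_simp
  · rw [one_sub_Phi, show Phi z = 1 - gq z by rw [← one_sub_Phi]; ring]
    rw [show gq w = (Real.sqrt (2 * Real.pi))⁻¹ * gI (-w) from rfl, gG, neg_sq]
    field_simp

lemma gq_nonneg (z : ℝ) : 0 ≤ gq z := mul_nonneg (by positivity) (gI_nonneg _)

lemma gq_le_one (z : ℝ) : gq z ≤ 1 := by
  have := one_sub_Phi z
  have h : 0 ≤ Phi z := mul_nonneg (by positivity) (gI_nonneg _)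
  linarith

lemma w_fz_cont (z : ℝ) : gq z * gG z = -(1 - gq z) * gG (-z) := by
  have h : 1 - gq z = Phi z := by rw [← one_sub_Phi]; ring
  rw [h, Phi_eq, gq, gG, gG, neg_sq]; ring

lemma gq_mul (z : ℝ) (hz : 2 < z) :
    gq z * Real.sqrt (2 * Real.pi) * z ≤ Real.exp (-z ^ 2 / 2) := by
  have h := mills_upper (-z) (by linarith)
  have hp := sqrt_two_pi_pos
  have : gq z * Real.sqrt (2 * Real.pi) = gI (-z) := by
    unfold gq; field_simp
  rw [this]; simpa using h

lemma gq_mul_z_le (z : ℝ) (hz : 2 < z) : gq z * z ≤ Real.exp (-z) := by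
  have h := gq_mul z hz
  have h2 := one_le_sqrt_two_pi
  have h3 : Real.exp (-z ^ 2 / 2) ≤ Real.exp (-z) := Real.exp_le_exp.2 (by nlinarith)
  have := gq_nonneg z
  have : gq z * z * 1 ≤ gq z * z * Real.sqrt (2 * Real.pi) :=
    mul_le_mul_of_nonneg_left (by linarith) (by positivity)
  nlinarith

lemma gq_le (z : ℝ) (hz : 2 < z) : gq z ≤ Real.exp (-z) := by
  have h := gq_mul_z_le z hz
  have := gq_nonneg z
  nlinarith

lemma exp_neg_le (z : ℝ) (hz : 2 < z) : Real.exp (-z) ≤ Real.exp (-z / 2) :=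
  Real.exp_le_exp.2 (by linarith)

lemma exp_sub_le (z u : ℝ) (hz : 2 < z) :
    Real.exp (u - z) ≤ Real.exp (-z / 2) * Real.exp u := by
  rw [← Real.exp_add]; exact Real.exp_le_exp.2 (by linarith)

/-- key middle range estimate -/
lemma gq_exp_le (z u : ℝ) (hz : 2 < z) (h0 : 0 ≤ u) (hu : u ≤ z) :
    gq z * z * (Real.exp (u ^ 2 / 2) * gI u) ≤ Real.exp (u - z) := by
  have h := gq_mul z hz
  have hq := gq_nonneg z
  calc gq z * z * (Real.exp (u ^ 2 / 2) * gI u)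
      ≤ gq z * z * (Real.exp (u ^ 2 / 2) * Real.sqrt (2 * Real.pi)) := by
        have := gI_le u
        gcongr
    _ = (gq z * Real.sqrt (2 * Real.pi) * z) * Real.exp (u ^ 2 / 2) := by ring
    _ ≤ Real.exp (-z ^ 2 / 2) * Real.exp (u ^ 2 / 2) := by gcongr
    _ = Real.exp (-z ^ 2 / 2 + u ^ 2 / 2) := by rw [Real.exp_add]
    _ ≤ Real.exp (u - z) := Real.exp_le_exp.2 (by nlinarith)

lemma deriv_left (z u : ℝ) (hz : 2 < z) (hu : u ≤ z) :
    |gq z * gG' u| ≤ 5 * Real.exp (-z / 2) * (1 + Real.exp u) := by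
  have hq := gq_nonneg z
  have hG := gG'_nonneg u
  have hE := Real.exp_pos u
  have hZ := Real.exp_pos (-z / 2)
  have hql := gq_le z hz
  have hen := exp_neg_le z hz
  have hp := mul_pos hZ hE
  rw [abs_of_nonneg (mul_nonneg hq hG)]
  by_cases h0 : u ≤ 0
  · have h1 := (gG'_le_r u h0).trans (r_le u h0)
    nlinarith [mul_le_mul_of_nonneg_left h1 hq]
  · push Not at h0
    have h1 := gq_exp_le z u hz h0.le hu
    have h2 := gq_mul_z_le z hz
    have hr := r_nonneg u
    have h3 : gq z * u ≤ gq z * z := mul_le_mul_of_nonneg_left hu hq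
    have h4 : gq z * ((1 + u ^ 2) * (Real.exp (u ^ 2 / 2) * gI u)) ≤
        (1 + z) * Real.exp (u - z) := by
      have : gq z * ((1 + u ^ 2) * (Real.exp (u ^ 2 / 2) * gI u)) ≤
        (1 + z) * (gq z * z * (Real.exp (u ^ 2 / 2) * gI u)) := by
        have h5 : 1 + u ^ 2 ≤ (1 + z) * z := by nlinarith
        calc _ ≤ gq z * (((1 + z) * z) * (Real.exp (u ^ 2 / 2) * gI u)) := by gcongr
          _ = _ := by ring
      exact this.trans (mul_le_mul_of_nonneg_left h1 (by linarith))
    have h6 : (1 + z) * Real.exp (u - z) ≤ 2 * (Real.exp (-z / 2) * Real.exp u) := by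
      have : 1 + z ≤ 2 * Real.exp (z / 2) := by linarith [Real.add_one_le_exp (z / 2)]
      calc _ ≤ 2 * Real.exp (z / 2) * Real.exp (u - z) := by gcongr
        _ = 2 * (Real.exp (-z / 2) * Real.exp u) := by
          rw [mul_assoc, ← Real.exp_add, ← Real.exp_add]; congr 2; ring
    have : gq z * gG' u = gq z * ((1 + u ^ 2) * (Real.exp (u ^ 2 / 2) * gI u)) + gq z * u := by
      unfold gG'; ring
    rw [this]
    nlinarith

lemma deriv_right (z u : ℝ) (hz : 2 < z) (hu : z ≤ u) :
    |(1 - gq z) * gG' (-u)| ≤ 5 * Real.exp (-z / 2) * (1 + Real.exp u) := by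
  have hq := gq_nonneg z
  have hq1 := gq_le_one z
  have hG := gG'_nonneg (-u)
  have hZ := Real.exp_pos (-z / 2)
  have hE := Real.exp_pos u
  rw [abs_of_nonneg (mul_nonneg (by linarith) hG)]
  have h1 := gG'_le_r (-u) (by linarith)
  have h2 := r_mul_le (-u) (by linarith)
  have h3 := r_nonneg (-u)
  have h4 : gG' (-u) ≤ 1 := by nlinarith
  have h5 : (1 - gq z) * gG' (-u) ≤ 1 := by nlinarith
  have h6 : 1 ≤ Real.exp (-z / 2) * Real.exp u := by
    rw [← Real.exp_add]; exact Real.one_le_exp (by linarith)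
  nlinarith

lemma val_bound (z u : ℝ) (hz : 2 < z) :
    |u * fz z u| ≤ Real.exp (-z / 2) * (1 + Real.exp u) := by
  have hq := gq_nonneg z
  have hq1 := gq_le_one z
  have hZ := Real.exp_pos (-z / 2)
  have hE := Real.exp_pos u
  have hp := mul_pos hZ hE
  have hql := gq_le z hz
  have hen := exp_neg_le z hz
  rw [w_fz]
  split_ifs with hu
  · rw [abs_mul, abs_of_nonneg hq]
    by_cases h0 : u ≤ 0
    · have h2 := r_mul_le u h0
      have : |gG u| ≤ 1 := by
        rw [gG, abs_mul, abs_of_nonneg (r_nonneg u), abs_of_nonpos h0]; linarith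
      nlinarith
    · push Not at h0
      have h1 := gq_exp_le z u hz h0.le hu
      have hr := r_nonneg u
      have h3 := exp_sub_le z u hz
      rw [gG, abs_of_nonneg (mul_nonneg h0.le hr)]
      have : gq z * (u * (Real.exp (u ^ 2 / 2) * gI u)) ≤
        gq z * z * (Real.exp (u ^ 2 / 2) * gI u) := by
        rw [← mul_assoc]; gcongr
      nlinarith
  · push Not at hu
    have h2 := r_mul_le (-u) (by linarith)
    have h3 := r_nonneg (-u)
    have h6 : 1 ≤ Real.exp (-z / 2) * Real.exp u := by
      rw [← Real.exp_add]; exact Real.one_le_exp (by linarith)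
    rw [abs_mul, abs_neg, abs_of_nonneg (show 0 ≤ 1 - gq z by linarith)]
    have : |gG (-u)| ≤ 1 := by
      rw [gG, abs_mul, abs_of_nonneg h3, abs_of_nonpos (by linarith)]; linarith
    nlinarith [abs_nonneg (gG (-u))]

lemma lip_left (z a b M : ℝ) (hz : 2 < z) (hab : a ≤ b) (hb : b ≤ z) (hM : b ≤ M) :
    |b * fz z b - a * fz z a| ≤ 5 * Real.exp (-z / 2) * (1 + Real.exp M) * (b - a) := by
  rw [w_fz, w_fz, if_pos hb, if_pos (hab.trans hb)]
  have := (convex_Icc a b).norm_image_sub_le_of_norm_hasDerivWithin_le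
    (f := fun x => gq z * gG x) (f' := fun x => gq z * gG' x)
    (C := 5 * Real.exp (-z / 2) * (1 + Real.exp M))
    (fun x _ => ((gG_hasDeriv x).const_mul _).hasDerivWithinAt)
    (fun x hx => (deriv_left z x hz (hx.2.trans hb)).trans (by
      have := Real.exp_le_exp.2 (hx.2.trans hM)
      gcongr))
    (Set.left_mem_Icc.2 hab) (Set.right_mem_Icc.2 hab)
  rw [Real.norm_eq_abs, Real.norm_eq_abs, abs_of_nonneg (sub_nonneg.2 hab)] at this
  exact this

lemma w_fz_right (z w : ℝ) (h : z ≤ w) : w * fz z w = -(1 - gq z) * gG (-w) := by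
  rw [w_fz]
  split_ifs with h1
  · obtain rfl := le_antisymm h h1
    exact w_fz_cont z
  · rfl

lemma lip_right (z a b M : ℝ) (hz : 2 < z) (hab : a ≤ b) (ha : z ≤ a) (hM : b ≤ M) :
    |b * fz z b - a * fz z a| ≤ 5 * Real.exp (-z / 2) * (1 + Real.exp M) * (b - a) := by
  rw [w_fz_right z b (ha.trans hab), w_fz_right z a ha]
  have := (convex_Icc a b).norm_image_sub_le_of_norm_hasDerivWithin_le
    (f := fun x => -(1 - gq z) * gG (-x)) (f' := fun x => (1 - gq z) * gG' (-x))
    (C := 5 * Real.exp (-z / 2) * (1 + Real.exp M))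
    (fun x _ => by
      have h1 := (gG_hasDeriv (-x)).comp x (hasDerivAt_neg x)
      have h2 := (h1.const_mul (-(1 - gq z))).hasDerivWithinAt (s := Set.Icc a b)
      refine HasDerivWithinAt.congr_deriv h2 ?_
      ring)
    (fun x hx => (deriv_right z x hz (ha.trans hx.1)).trans (by
      have := Real.exp_le_exp.2 (hx.2.trans hM)
      gcongr))
    (Set.left_mem_Icc.2 hab) (Set.right_mem_Icc.2 hab)
  rw [Real.norm_eq_abs, Real.norm_eq_abs, abs_of_nonneg (sub_nonneg.2 hab)] at this
  exact this

lemma lip_all (z a b M : ℝ) (hz : 2 < z) (hab : a ≤ b) (hM : b ≤ M) :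
    |b * fz z b - a * fz z a| ≤ 5 * Real.exp (-z / 2) * (1 + Real.exp M) * (b - a) := by
  by_cases hb : b ≤ z
  · exact lip_left z a b M hz hab hb hM
  by_cases ha : z ≤ a
  · exact lip_right z a b M hz hab ha hM
  push Not at ha hb
  have h1 := lip_left z a z M hz ha.le le_rfl (hb.le.trans hM)
  have h2 := lip_right z z b M hz hb.le le_rfl hM
  have h3 := abs_sub_le (b * fz z b) (z * fz z z) (a * fz z a)
  calc _ ≤ _ := h3
    _ ≤ _ := add_le_add h2 h1
    _ = _ := by ring

lemma key_bound (z a b M : ℝ) (hz : 2 < z) (ha : a ≤ M) (hb : b ≤ M) :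
    |a * fz z a - b * fz z b| ≤ 5 * Real.exp (-z / 2) * (1 + Real.exp M) * min 1 |a - b| := by
  have hC : 0 ≤ 5 * Real.exp (-z / 2) * (1 + Real.exp M) := by positivity
  rw [mul_min_of_nonneg _ _ hC, mul_one]
  apply le_min
  · have h1 := val_bound z a hz
    have h2 := val_bound z b hz
    have e1 := Real.exp_le_exp.2 ha
    have e2 := Real.exp_le_exp.2 hb
    have hZ := Real.exp_pos (-z / 2)
    have h3 := abs_sub (a * fz z a) (b * fz z b)
    have := Real.exp_pos M
    nlinarith [mul_le_mul_of_nonneg_left e1 hZ.le, mul_le_mul_of_nonneg_left e2 hZ.le,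
      mul_pos hZ this]
  · rcases le_total a b with h | h
    · rw [abs_sub_comm, abs_sub_comm a b, abs_of_nonneg (sub_nonneg.2 h)]
      exact lip_all z a b M hz h hb
    · rw [abs_of_nonneg (sub_nonneg.2 h)]
      exact lip_all z b a M hz h ha

lemma min_sub_le (s t : ℝ) : min 1 |s - t| ≤ min 1 |s| + min 1 |t| := by
  have := abs_sub s t
  have h1 := abs_nonneg s
  have h2 := abs_nonneg t
  rcases min_cases 1 |s| with h | h <;> rcases min_cases 1 |t| with h' | h' <;>
    rcases min_cases 1 |s - t| with h'' | h'' <;> linarith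

section prob

set_option linter.unusedSectionVars false

variable {Ω : Type*} [MeasureSpace Ω] [IsProbabilityMeasure (ℙ : Measure Ω)] {n : ℕ}

lemma xbar_meas (ξ : Fin n → Ω → ℝ) (hmeas : ∀ i, Measurable (ξ i)) (i : Fin n) :
    Measurable (xbar ξ i) :=
  Measurable.ite (measurableSet_le (hmeas i) measurable_const) (hmeas i) measurable_const

lemma xbar_le_one (ξ : Fin n → Ω → ℝ) (i : Fin n) (ω : Ω) : xbar ξ i ω ≤ 1 := by
  unfold xbar; split_ifs <;> linarith

lemma xbar_sq_le (ξ : Fin n → Ω → ℝ) (i : Fin n) (ω : Ω) : xbar ξ i ω ^ 2 ≤ ξ i ω ^ 2 := by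
  unfold xbar; split_ifs
  · exact le_rfl
  · simpa using sq_nonneg (ξ i ω)

lemma xbar_indep (ξ : Fin n → Ω → ℝ) (hindep : iIndepFun ξ ℙ) :
    iIndepFun (xbar ξ) ℙ := by
  have := hindep.comp (fun _ x => if x ≤ 1 then x else 0) (fun _ =>
    Measurable.ite (measurableSet_le measurable_id measurable_const) measurable_id measurable_const)
  exact this

lemma Wbari_eq (ξ : Fin n → Ω → ℝ) (i : Fin n) :
    Wbari ξ i = ∑ j ∈ Finset.univ.erase i, xbar ξ j := by
  funext ω
  rw [Finset.sum_apply, Wbari, Wbar, ← Finset.sum_erase_add _ _ (Finset.mem_univ i)]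
  ring

lemma xbar_sq_int (ξ : Fin n → Ω → ℝ) (hmeas : ∀ i, Measurable (ξ i))
    (hL2 : ∀ i, MemLp (ξ i) 2 ℙ) (i : Fin n) : Integrable (fun ω => xbar ξ i ω ^ 2) ℙ := by
  refine (hL2 i).integrable_sq.mono' ((xbar_meas ξ hmeas i).pow_const 2).aestronglyMeasurable ?_
  refine Filter.Eventually.of_forall fun ω => ?_
  rw [Real.norm_eq_abs, abs_of_nonneg (sq_nonneg _)]
  exact xbar_sq_le ξ i ω

lemma xbar_int (ξ : Fin n → Ω → ℝ) (hmeas : ∀ i, Measurable (ξ i))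
    (hL2 : ∀ i, MemLp (ξ i) 2 ℙ) (i : Fin n) : Integrable (xbar ξ i) ℙ := by
  have h := (memLp_two_iff_integrable_sq (xbar_meas ξ hmeas i).aestronglyMeasurable).2
    (xbar_sq_int ξ hmeas hL2 i)
  exact h.integrable (by norm_num)

lemma xbar_mean (ξ : Fin n → Ω → ℝ) (hmeas : ∀ i, Measurable (ξ i))
    (hL2 : ∀ i, MemLp (ξ i) 2 ℙ) (hmean : ∀ i, ∫ ω, ξ i ω = 0) (i : Fin n) :
    ∫ ω, xbar ξ i ω ≤ 0 := by
  rw [← hmean i]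
  apply integral_mono (xbar_int ξ hmeas hL2 i) ((hL2 i).integrable (by norm_num))
  intro ω
  simp only [xbar]
  split_ifs <;> linarith

lemma exp_le_quad (x : ℝ) (hx : x ≤ 1) : Real.exp x ≤ 1 + x + x ^ 2 := by
  by_cases h : -1 ≤ x
  · have := (abs_le.1 (Real.abs_exp_sub_one_sub_id_le (abs_le.2 ⟨h, hx⟩))).2
    linarith
  · push Not at h
    have : Real.exp x ≤ 1 := Real.exp_le_one_iff.2 (by linarith)
    nlinarith

lemma mgf_xbar (ξ : Fin n → Ω → ℝ) (hmeas : ∀ i, Measurable (ξ i))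
    (hL2 : ∀ i, MemLp (ξ i) 2 ℙ) (hmean : ∀ i, ∫ ω, ξ i ω = 0) (i : Fin n) :
    mgf (xbar ξ i) ℙ 1 ≤ Real.exp (∫ ω, ξ i ω ^ 2) := by
  have h1 : mgf (xbar ξ i) ℙ 1 ≤ ∫ ω, (1 + xbar ξ i ω + xbar ξ i ω ^ 2) := by
    unfold mgf
    apply integral_mono_of_nonneg
    · exact Filter.Eventually.of_forall fun ω => (Real.exp_pos _).le
    · exact ((integrable_const _).add (xbar_int ξ hmeas hL2 i)).add (xbar_sq_int ξ hmeas hL2 i)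
    · refine Filter.Eventually.of_forall fun ω => ?_
      simp only [one_mul]
      exact exp_le_quad _ (xbar_le_one ξ i ω)
  have i1 : Integrable (fun ω => 1 + xbar ξ i ω) ℙ :=
    (integrable_const _).add (xbar_int ξ hmeas hL2 i)
  rw [integral_add i1 (xbar_sq_int ξ hmeas hL2 i),
    integral_add (integrable_const _) (xbar_int ξ hmeas hL2 i)] at h1
  have h2 := xbar_mean ξ hmeas hL2 hmean i
  have h3 : ∫ ω, xbar ξ i ω ^ 2 ≤ ∫ ω, ξ i ω ^ 2 :=
    integral_mono (xbar_sq_int ξ hmeas hL2 i) (hL2 i).integrable_sq (xbar_sq_le ξ i)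
  have h4 := Real.add_one_le_exp (∫ ω, ξ i ω ^ 2)
  simp at h1
  linarith

lemma exp_W_int (ξ : Fin n → Ω → ℝ) (hmeas : ∀ i, Measurable (ξ i)) (i : Fin n) :
    Integrable (fun ω => Real.exp (Wbari ξ i ω)) ℙ := by
  have hm : Measurable (Wbari ξ i) := by
    have h := Finset.measurable_sum (Finset.univ.erase i) fun j _ => xbar_meas ξ hmeas j
    have e : Wbari ξ i = fun ω => ∑ j ∈ Finset.univ.erase i, xbar ξ j ω := by
      rw [Wbari_eq]; funext ω; rw [Finset.sum_apply]
    rw [e]; exact h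
  refine (integrable_const (Real.exp (∑ j ∈ Finset.univ.erase i, 1))).mono'
    hm.exp.aestronglyMeasurable (Filter.Eventually.of_forall fun ω => ?_)
  rw [Real.norm_eq_abs, abs_of_pos (Real.exp_pos _), Wbari_eq, Finset.sum_apply]
  exact Real.exp_le_exp.2 (Finset.sum_le_sum fun j _ => xbar_le_one ξ j ω)

lemma exp_W_le (ξ : Fin n → Ω → ℝ) (hmeas : ∀ i, Measurable (ξ i))
    (hindep : iIndepFun ξ ℙ)
    (hL2 : ∀ i, MemLp (ξ i) 2 ℙ) (hmean : ∀ i, ∫ ω, ξ i ω = 0)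
    (hvar : ∑ i, ∫ ω, (ξ i ω) ^ 2 = 1) (i : Fin n) :
    ∫ ω, Real.exp (Wbari ξ i ω) ≤ Real.exp 1 := by
  have h1 : ∫ ω, Real.exp (Wbari ξ i ω) = mgf (Wbari ξ i) ℙ 1 := by simp [mgf]
  rw [h1, Wbari_eq, (xbar_indep ξ hindep).mgf_sum (xbar_meas ξ hmeas)]
  calc ∏ j ∈ Finset.univ.erase i, mgf (xbar ξ j) ℙ 1
      ≤ ∏ j ∈ Finset.univ.erase i, Real.exp (∫ ω, ξ j ω ^ 2) :=
        Finset.prod_le_prod (fun j _ => mgf_nonneg) (fun j _ => mgf_xbar ξ hmeas hL2 hmean j)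
    _ = Real.exp (∑ j ∈ Finset.univ.erase i, ∫ ω, ξ j ω ^ 2) := by rw [Real.exp_sum]
    _ ≤ Real.exp 1 := by
      apply Real.exp_le_exp.2
      rw [← hvar]
      exact Finset.sum_le_sum_of_subset_of_nonneg (Finset.erase_subset _ _)
        fun j _ _ => integral_nonneg fun ω => sq_nonneg _

/-- truncated absolute value of `xbar` -/
noncomputable def xa (ξ : Fin n → Ω → ℝ) (i : Fin n) (ω : Ω) : ℝ := min 1 |xbar ξ i ω|

lemma xa_nonneg (ξ : Fin n → Ω → ℝ) (i : Fin n) (ω : Ω) : 0 ≤ xa ξ i ω :=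
  le_min zero_le_one (abs_nonneg _)

lemma xa_le (ξ : Fin n → Ω → ℝ) (i : Fin n) (ω : Ω) : xa ξ i ω ≤ 1 := min_le_left _ _

lemma xa_meas (ξ : Fin n → Ω → ℝ) (hmeas : ∀ i, Measurable (ξ i)) (i : Fin n) :
    Measurable (xa ξ i) := measurable_const.min (xbar_meas ξ hmeas i).abs

lemma xa_pow_int (ξ : Fin n → Ω → ℝ) (hmeas : ∀ i, Measurable (ξ i)) (i : Fin n) (k : ℕ) :
    Integrable (fun ω => xa ξ i ω ^ k) ℙ := by
  refine (integrable_const (1:ℝ)).mono' ((xa_meas ξ hmeas i).pow_const k).aestronglyMeasurable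
    (Filter.Eventually.of_forall fun ω => ?_)
  rw [Real.norm_eq_abs, abs_of_nonneg (pow_nonneg (xa_nonneg _ _ _) _)]
  exact pow_le_one₀ (xa_nonneg _ _ _) (xa_le _ _ _)

lemma xa_int (ξ : Fin n → Ω → ℝ) (hmeas : ∀ i, Measurable (ξ i)) (i : Fin n) :
    Integrable (xa ξ i) ℙ := by
  simpa using xa_pow_int ξ hmeas i 1

lemma inner_bound (ξ : Fin n → Ω → ℝ) (hmeas : ∀ i, Measurable (ξ i))
    (hindep : iIndepFun ξ ℙ)
    (hL2 : ∀ i, MemLp (ξ i) 2 ℙ) (hmean : ∀ i, ∫ ω, ξ i ω = 0)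
    (hvar : ∑ i, ∫ ω, (ξ i ω) ^ 2 = 1) (z : ℝ) (hz : 2 < z) (i : Fin n) (t : ℝ) (ht : t ≤ 1) :
    ‖∫ ω, ((Wbari ξ i ω + xbar ξ i ω) * fz z (Wbari ξ i ω + xbar ξ i ω)
          - (Wbari ξ i ω + t) * fz z (Wbari ξ i ω + t))‖ ≤
      45 * Real.exp (-z / 2) * ((∫ ω, xa ξ i ω) + min 1 |t|) := by
  set C := 5 * Real.exp (-z / 2) with hC
  have hC0 : 0 ≤ C := by positivity
  let H : Ω → ℝ := fun ω => 1 + Real.exp 1 * Real.exp (Wbari ξ i ω)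
  let Y : Ω → ℝ := fun ω => xa ξ i ω + min 1 |t|
  have hH : Integrable H ℙ := (integrable_const _).add ((exp_W_int ξ hmeas i).const_mul _)
  have hY : Integrable Y ℙ := (xa_int ξ hmeas i).add (integrable_const _)
  have hind0 : IndepFun (Wbari ξ i) (xbar ξ i) ℙ := by
    rw [Wbari_eq]
    exact (xbar_indep ξ hindep).indepFun_finsetSum_of_notMem (xbar_meas ξ hmeas)
      (Finset.notMem_erase i _)
  have hind : IndepFun H Y ℙ :=
    hind0.comp (φ := fun w => 1 + Real.exp 1 * Real.exp w) (ψ := fun x => min 1 |x| + min 1 |t|)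
      (by fun_prop) (by fun_prop)
  have hint : Integrable (fun ω => C * (H ω * Y ω)) ℙ := (hind.integrable_mul hH hY).const_mul _
  have h1 := norm_integral_le_of_norm_le (μ := (ℙ : Measure Ω)) hint
    (f := fun ω => ((Wbari ξ i ω + xbar ξ i ω) * fz z (Wbari ξ i ω + xbar ξ i ω)
          - (Wbari ξ i ω + t) * fz z (Wbari ξ i ω + t)))
    (Filter.Eventually.of_forall fun ω => by
      have hk := key_bound z (Wbari ξ i ω + xbar ξ i ω) (Wbari ξ i ω + t) (1 + Wbari ξ i ω) hz
        (by linarith [xbar_le_one ξ i ω]) (by linarith)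
      rw [Real.norm_eq_abs]
      refine hk.trans ?_
      rw [Real.exp_add, add_sub_add_left_eq_sub, mul_assoc]
      have := min_sub_le (xbar ξ i ω) t
      have hHp : 0 ≤ 1 + Real.exp 1 * Real.exp (Wbari ξ i ω) := by positivity
      exact mul_le_mul_of_nonneg_left (mul_le_mul_of_nonneg_left this hHp) hC0)
  refine h1.trans ?_
  rw [integral_const_mul, hind.integral_fun_mul_eq_mul_integral hH.aestronglyMeasurable
    hY.aestronglyMeasurable]
  have hYe : ∫ ω, Y ω = (∫ ω, xa ξ i ω) + min 1 |t| := by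
    rw [integral_add (xa_int ξ hmeas i) (integrable_const _)]; simp
  have hHe : ∫ ω, H ω ≤ 9 := by
    rw [integral_add (integrable_const _) ((exp_W_int ξ hmeas i).const_mul _), integral_const_mul]
    have h2 := exp_W_le ξ hmeas hindep hL2 hmean hvar i
    have h3 := Real.exp_one_lt_d9
    have h4 := Real.exp_pos 1
    simp
    nlinarith
  rw [hYe]
  have hYn : 0 ≤ (∫ ω, xa ξ i ω) + min 1 |t| :=
    add_nonneg (integral_nonneg (xa_nonneg ξ i)) (le_min zero_le_one (abs_nonneg _))
  calc _ ≤ C * (9 * ((∫ ω, xa ξ i ω) + min 1 |t|)) := by gcongr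
    _ = _ := by rw [hC]; ring

/-- The kernel integrand is bounded. -/
lemma k_bound (x t : ℝ) :
    ‖x * ((if 0 ≤ t ∧ t ≤ x then (1 : ℝ) else 0) - (if x ≤ t ∧ t < 0 then (1 : ℝ) else 0))‖ₑ ≤
      Set.indicator (Set.Icc (-|x|) |x|) (fun _ => ENNReal.ofReal |x|) t := by
  have hx : ‖x‖ₑ = ENNReal.ofReal |x| := by rw [← ofReal_norm, Real.norm_eq_abs]
  by_cases h : t ∈ Set.Icc (-|x|) |x|
  · rw [Set.indicator_of_mem h, enorm_mul, hx]
    refine mul_le_of_le_one_right' ?_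
    rw [← ofReal_norm]
    apply ENNReal.ofReal_le_one.2
    split_ifs <;> norm_num
  · have h1 : ¬ (0 ≤ t ∧ t ≤ x) := by
      rintro ⟨a, b⟩
      exact h ⟨by linarith [abs_nonneg x], b.trans (le_abs_self x)⟩
    have h2 : ¬ (x ≤ t ∧ t < 0) := by
      rintro ⟨a, b⟩
      exact h ⟨(neg_abs_le x).trans a, by linarith [abs_nonneg x]⟩
    simp [h1, h2]

lemma term_bound (ξ : Fin n → Ω → ℝ) (hmeas : ∀ i, Measurable (ξ i))
    (hL2 : ∀ i, MemLp (ξ i) 2 ℙ) (i : Fin n) (C m : ℝ) (hC : 0 ≤ C) (hm : 0 ≤ m)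
    (F : ℝ → ℝ) (hF : ∀ t ≤ 1, ‖F t‖ ≤ C * (m + min 1 |t|)) :
    |∫ t in Set.Iic (1 : ℝ), F t * Kbar ξ i t| ≤
      2 * C * ∫ ω, (m + xa ξ i ω) * xbar ξ i ω ^ 2 := by
  have hint : Integrable (fun ω => (m + xa ξ i ω) * xbar ξ i ω ^ 2) ℙ := by
    refine ((xbar_sq_int ξ hmeas hL2 i).const_mul (m + 1)).mono'
      (((xa_meas ξ hmeas i).const_add m).mul
        ((xbar_meas ξ hmeas i).pow_const 2)).aestronglyMeasurable
      (Filter.Eventually.of_forall fun ω => ?_)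
    have h1 := xa_nonneg ξ i ω
    have h2 := xa_le ξ i ω
    rw [Real.norm_eq_abs, abs_of_nonneg (by positivity)]
    gcongr
  have hnn : ∀ ω, 0 ≤ (m + xa ξ i ω) * xbar ξ i ω ^ 2 := fun ω =>
    mul_nonneg (add_nonneg hm (xa_nonneg _ _ _)) (sq_nonneg _)
  have hR : 0 ≤ 2 * C * ∫ ω, (m + xa ξ i ω) * xbar ξ i ω ^ 2 :=
    mul_nonneg (by positivity) (integral_nonneg hnn)
  rw [← Real.norm_eq_abs, ← ENNReal.ofReal_le_ofReal_iff hR, ofReal_norm]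
  let J : ℝ → Ω → ENNReal := fun t ω => ENNReal.ofReal (C * (m + min 1 |t|)) *
    Set.indicator (Set.Icc (-|xbar ξ i ω|) |xbar ξ i ω|) (fun _ => ENNReal.ofReal |xbar ξ i ω|) t
  have hJm : Measurable (Function.uncurry J) := by
    have hx := xbar_meas ξ hmeas i
    have hx2 : Measurable (fun p : ℝ × Ω => xbar ξ i p.2) := hx.comp measurable_snd
    have hs : MeasurableSet {p : ℝ × Ω | p.1 ∈ Set.Icc (-|xbar ξ i p.2|) |xbar ξ i p.2|} :=
      (measurableSet_le hx2.abs.neg measurable_fst).inter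
        (measurableSet_le measurable_fst hx2.abs)
    have h1 : Measurable (Set.indicator
        {p : ℝ × Ω | p.1 ∈ Set.Icc (-|xbar ξ i p.2|) |xbar ξ i p.2|}
        (fun p : ℝ × Ω => ENNReal.ofReal |xbar ξ i p.2|)) :=
      (hx2.abs.ennreal_ofReal).indicator hs
    have h2 : Measurable (fun p : ℝ × Ω => ENNReal.ofReal (C * (m + min 1 |p.1|))) := by fun_prop
    exact h2.mul h1
  calc ‖∫ t in Set.Iic (1 : ℝ), F t * Kbar ξ i t‖ₑ
      ≤ ∫⁻ t in Set.Iic (1 : ℝ), ‖F t * Kbar ξ i t‖ₑ := enorm_integral_le_lintegral_enorm _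
    _ ≤ ∫⁻ t in Set.Iic (1 : ℝ), ∫⁻ ω, J t ω := by
        refine setLIntegral_mono' measurableSet_Iic fun t ht => ?_
        have hFt : ‖F t‖ₑ ≤ ENNReal.ofReal (C * (m + min 1 |t|)) := by
          rw [← ofReal_norm]; exact ENNReal.ofReal_le_ofReal (hF t ht)
        have hK : ‖Kbar ξ i t‖ₑ ≤ ∫⁻ ω, Set.indicator (Set.Icc (-|xbar ξ i ω|) |xbar ξ i ω|)
            (fun _ => ENNReal.ofReal |xbar ξ i ω|) t :=
          (enorm_integral_le_lintegral_enorm _).trans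
            (lintegral_mono fun ω => k_bound (xbar ξ i ω) t)
        rw [enorm_mul]
        refine (mul_le_mul' hFt hK).trans ?_
        rw [← lintegral_const_mul' _ _ ENNReal.ofReal_ne_top]
    _ ≤ ∫⁻ t, ∫⁻ ω, J t ω := setLIntegral_le_lintegral _ _
    _ = ∫⁻ ω, ∫⁻ t, J t ω := lintegral_lintegral_swap hJm.aemeasurable
    _ ≤ ∫⁻ ω, ENNReal.ofReal (2 * C * ((m + xa ξ i ω) * xbar ξ i ω ^ 2)) := by
        refine lintegral_mono fun ω => ?_
        have hb : ∀ t, J t ω ≤ Set.indicator (Set.Icc (-|xbar ξ i ω|) |xbar ξ i ω|)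
            (fun _ => ENNReal.ofReal (C * (m + xa ξ i ω) * |xbar ξ i ω|)) t := by
          intro t
          simp only [J]
          by_cases h : t ∈ Set.Icc (-|xbar ξ i ω|) |xbar ξ i ω|
          · rw [Set.indicator_of_mem h, Set.indicator_of_mem h, ← ENNReal.ofReal_mul' (abs_nonneg _)]
            apply ENNReal.ofReal_le_ofReal
            have : min 1 |t| ≤ xa ξ i ω := min_le_min le_rfl (abs_le.2 h)
            gcongr
          · rw [Set.indicator_of_notMem h, Set.indicator_of_notMem h]; simp
        refine (lintegral_mono hb).trans ?_
        rw [lintegral_indicator_const measurableSet_Icc, Real.volume_Icc,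
          ← ENNReal.ofReal_mul' (by linarith [abs_nonneg (xbar ξ i ω)])]
        apply ENNReal.ofReal_le_ofReal
        rw [← sq_abs (xbar ξ i ω)]
        apply le_of_eq; ring
    _ = ENNReal.ofReal (∫ ω, 2 * C * ((m + xa ξ i ω) * xbar ξ i ω ^ 2)) := by
        rw [ofReal_integral_eq_lintegral_ofReal (hint.const_mul _)]
        exact Filter.Eventually.of_forall fun ω => mul_nonneg (by positivity) (hnn ω)
    _ = _ := by rw [integral_const_mul]

/-- i-th summand of beta2 + beta3 integrand -/
lemma moment_bound (ξ : Fin n → Ω → ℝ) (hmeas : ∀ i, Measurable (ξ i))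
    (hL2 : ∀ i, MemLp (ξ i) 2 ℙ) (i : Fin n) :
    ∫ ω, ((∫ ω', xa ξ i ω') + xa ξ i ω) * xbar ξ i ω ^ 2 ≤
      3 * ((∫ ω, (if 1 < |ξ i ω| then (ξ i ω) ^ 2 else 0)) +
        ∫ ω, (if |ξ i ω| ≤ 1 then |ξ i ω| ^ 3 else 0)) := by
  set m := ∫ ω', xa ξ i ω' with hm
  have hm0 : 0 ≤ m := integral_nonneg (xa_nonneg ξ i)
  have hm1 : m ≤ 1 := by
    have := integral_mono (xa_int ξ hmeas i) (integrable_const (1:ℝ)) (xa_le ξ i)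
    simpa using this
  have hI2 : Integrable (fun ω => if 1 < |ξ i ω| then (ξ i ω) ^ 2 else 0) ℙ := by
    refine (hL2 i).integrable_sq.mono' (Measurable.ite
      (measurableSet_lt measurable_const (hmeas i).abs) ((hmeas i).pow_const 2)
      measurable_const).aestronglyMeasurable (Filter.Eventually.of_forall fun ω => ?_)
    split_ifs
    · rw [Real.norm_eq_abs, abs_of_nonneg (sq_nonneg _)]
    · simpa using sq_nonneg (ξ i ω)
  have hI3 : Integrable (fun ω => if |ξ i ω| ≤ 1 then |ξ i ω| ^ 3 else 0) ℙ := by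
    refine (integrable_const (1:ℝ)).mono' (Measurable.ite
      (measurableSet_le (hmeas i).abs measurable_const) ((hmeas i).abs.pow_const 3)
      measurable_const).aestronglyMeasurable (Filter.Eventually.of_forall fun ω => ?_)
    split_ifs with h
    · rw [Real.norm_eq_abs, abs_of_nonneg (by positivity)]
      exact pow_le_one₀ (abs_nonneg _) h
    · simp
  set b2 : Ω → ℝ := fun ω => if 1 < |ξ i ω| then (ξ i ω) ^ 2 else 0 with hb2
  set b3 : Ω → ℝ := fun ω => if |ξ i ω| ≤ 1 then |ξ i ω| ^ 3 else 0 with hb3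
  -- pointwise facts
  have p1 : ∀ ω, xa ξ i ω * xbar ξ i ω ^ 2 ≤ b2 ω + b3 ω ∧ xa ξ i ω ^ 3 ≤ b2 ω + b3 ω ∧
      xbar ξ i ω ^ 2 ≤ xa ξ i ω ^ 2 + b2 ω := by
    intro ω
    simp only [hb2, hb3]
    have hsq := xbar_sq_le ξ i ω
    have a0 := xa_nonneg ξ i ω
    have a1 := xa_le ξ i ω
    by_cases h : |ξ i ω| ≤ 1
    · have hx : xbar ξ i ω = ξ i ω := by
        rw [xbar, if_pos ((le_abs_self _).trans h)]
      have ha : xa ξ i ω = |ξ i ω| := by rw [xa, hx, min_eq_right h]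
      rw [if_neg (not_lt.2 h), if_pos h, ha, hx, ← sq_abs (ξ i ω)]
      refine ⟨le_of_eq (by ring), le_of_eq (by ring), le_of_eq (by ring)⟩
    · rw [if_neg h, if_pos (not_le.1 h)]
      push Not at h
      have h1 : 1 ≤ ξ i ω ^ 2 := by rw [← sq_abs]; nlinarith
      have h2 := sq_nonneg (xbar ξ i ω)
      refine ⟨by nlinarith, ?_, by nlinarith [sq_nonneg (xa ξ i ω)]⟩
      have := pow_le_one₀ a0 a1 (n := 3)
      linarith
  have p2 : ∀ ω, (m + xa ξ i ω) * xbar ξ i ω ^ 2 ≤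
      3 * b2 ω + 2 * b3 ω + (m ^ 3 - m ^ 2 * xa ξ i ω) := by
    intro ω
    obtain ⟨q1, q2, q3⟩ := p1 ω
    have a0 := xa_nonneg ξ i ω
    have hb : 0 ≤ b2 ω := by simp only [hb2]; split_ifs <;> positivity
    have q4 : 0 ≤ (xa ξ i ω - m) ^ 2 * (xa ξ i ω + m) := by positivity
    have q5 := mul_le_mul_of_nonneg_left q3 hm0
    nlinarith
  have hrhs : Integrable (fun ω => 3 * b2 ω + 2 * b3 ω + (m ^ 3 - m ^ 2 * xa ξ i ω)) ℙ :=
    ((hI2.const_mul 3).add (hI3.const_mul 2)).add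
      ((integrable_const _).sub ((xa_int ξ hmeas i).const_mul _))
  have hle := integral_mono_of_nonneg (μ := (ℙ : Measure Ω))
    (Filter.Eventually.of_forall fun ω =>
      mul_nonneg (add_nonneg hm0 (xa_nonneg ξ i ω)) (sq_nonneg (xbar ξ i ω))) hrhs
    (Filter.Eventually.of_forall p2)
  refine hle.trans ?_
  have i1 : Integrable (fun ω => 3 * b2 ω + 2 * b3 ω) ℙ := (hI2.const_mul 3).add (hI3.const_mul 2)
  have i2 : Integrable (fun ω => m ^ 3 - m ^ 2 * xa ξ i ω) ℙ :=
    (integrable_const _).sub ((xa_int ξ hmeas i).const_mul _)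
  rw [integral_add i1 i2,
    integral_add (hI2.const_mul 3) (hI3.const_mul 2),
    integral_sub (integrable_const _) ((xa_int ξ hmeas i).const_mul _),
    integral_const_mul, integral_const_mul, integral_const_mul, ← hm]
  have hb3n : 0 ≤ ∫ ω, b3 ω := integral_nonneg fun ω => by
    simp only [hb3]; split_ifs <;> simp
  simp
  nlinarith

end prob

lemma const_bound : (270 : ℝ) ≤
    103.2 + 80 * Real.exp (Real.exp 1 ^ 2 - 2) / Real.sqrt (2 * Real.pi) := by
  have h1 := sqrt_two_pi_le
  have hp := sqrt_two_pi_pos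
  have he := Real.exp_one_gt_d9
  have h2 : (5.38 : ℝ) ≤ Real.exp 1 ^ 2 - 2 := by nlinarith
  have h3 : (6.38 : ℝ) ≤ Real.exp (Real.exp 1 ^ 2 - 2) := by
    linarith [Real.add_one_le_exp (Real.exp 1 ^ 2 - 2)]
  have : (170 : ℝ) ≤ 80 * Real.exp (Real.exp 1 ^ 2 - 2) / Real.sqrt (2 * Real.pi) := by
    rw [le_div_iff₀ hp]; nlinarith
  linarith

/-- Bound on R22. -/
theorem R22_bound
    {Ω : Type*} [MeasureSpace Ω] [IsProbabilityMeasure (ℙ : Measure Ω)]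
    {n : ℕ} (ξ : Fin n → Ω → ℝ)
    (hmeas : ∀ i, Measurable (ξ i))
    (hindep : iIndepFun ξ ℙ)
    (hL2 : ∀ i, MemLp (ξ i) 2 ℙ)
    (hmean : ∀ i, ∫ ω, ξ i ω = 0)
    (hvar : ∑ i, ∫ ω, (ξ i ω) ^ 2 = 1)
    (z : ℝ) (hz : 2 < z) :
    |∑ i, ∫ t in Set.Iic (1 : ℝ),
        (∫ ω, ((Wbari ξ i ω + xbar ξ i ω) * fz z (Wbari ξ i ω + xbar ξ i ω)
          - (Wbari ξ i ω + t) * fz z (Wbari ξ i ω + t))) * Kbar ξ i t|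
      ≤ (103.2 + 80 * Real.exp (Real.exp 1 ^ 2 - 2) / Real.sqrt (2 * Real.pi))
          * Real.exp (-z / 2) * (beta2 ξ + beta3 ξ) := by
  have hb : ∀ i, 0 ≤ (∫ ω, (if 1 < |ξ i ω| then (ξ i ω) ^ 2 else 0)) +
        ∫ ω, (if |ξ i ω| ≤ 1 then |ξ i ω| ^ 3 else 0) := fun i =>
    add_nonneg (integral_nonneg fun ω => by simp only; split_ifs <;> positivity)
      (integral_nonneg fun ω => by simp only; split_ifs <;> positivity)
  have hsum : beta2 ξ + beta3 ξ = ∑ i, ((∫ ω, (if 1 < |ξ i ω| then (ξ i ω) ^ 2 else 0)) +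
        ∫ ω, (if |ξ i ω| ≤ 1 then |ξ i ω| ^ 3 else 0)) := by
    rw [beta2, beta3, Finset.sum_add_distrib]
  have hnn : 0 ≤ beta2 ξ + beta3 ξ := by
    rw [hsum]; exact Finset.sum_nonneg fun i _ => hb i
  have hterm : ∀ i, |∫ t in Set.Iic (1 : ℝ),
        (∫ ω, ((Wbari ξ i ω + xbar ξ i ω) * fz z (Wbari ξ i ω + xbar ξ i ω)
          - (Wbari ξ i ω + t) * fz z (Wbari ξ i ω + t))) * Kbar ξ i t| ≤
      270 * Real.exp (-z / 2) * ((∫ ω, (if 1 < |ξ i ω| then (ξ i ω) ^ 2 else 0)) +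
        ∫ ω, (if |ξ i ω| ≤ 1 then |ξ i ω| ^ 3 else 0)) := by
    intro i
    have h1 := term_bound ξ hmeas hL2 i (45 * Real.exp (-z / 2)) (∫ ω, xa ξ i ω) (by positivity)
      (integral_nonneg (xa_nonneg ξ i)) _
      (fun t ht => inner_bound ξ hmeas hindep hL2 hmean hvar z hz i t ht)
    have h2 := moment_bound ξ hmeas hL2 i
    have h3 := mul_le_mul_of_nonneg_left h2
      (show 0 ≤ 2 * (45 * Real.exp (-z / 2)) by positivity)
    linarith
  calc _ ≤ _ := Finset.abs_sum_le_sum_abs _ _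
    _ ≤ _ := Finset.sum_le_sum fun i _ => hterm i
    _ = 270 * Real.exp (-z / 2) * (beta2 ξ + beta3 ξ) := by rw [hsum, Finset.mul_sum]
    _ ≤ _ := by
      have := const_bound
      gcongr
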